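/- For real numbers 0 < a ≤ b, real q ∈ (1, 2), and any real x ∈ (−a, a), we have a·(1 + x/a)^q + b·(1 − x/b)^q − (a + b) ≥ (q(q − 1) / (3a)) · x². -/

import Mathlib

/-!
Write `x = a t`. The second derivative of `(1 + t) ^ q` is `q (q - 1) (1 + t) ^ (q - 2)`, and since
`q - 2 ≤ 0`, Bernoulli's inequality bounds it below by its tangent at `0`. Integrating twice, the
third Taylor polynomial of `(1 + t) ^ q` is a lower bound on all of `[-1, ∞)`; its cubic term costs
at most a third of the quadratic one as long as `(2 - q) t ≤ 1`, which leaves `q (q - 1) t ^ 2 / 3`.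
For the `b` term Bernoulli's inequality suffices, and the linear terms `± q x` cancel.
-/

theorem isMinOn_of_hasDerivAt2_nonneg {D : Set ℝ} {f f' f'' : ℝ → ℝ} {c : ℝ}
    (hD : Convex ℝ D) (hf : ContinuousOn f D)
    (hf' : ∀ x ∈ interior D, HasDerivAt f (f' x) x)
    (hf'' : ∀ x ∈ interior D, HasDerivAt f' (f'' x) x)
    (hf''_nonneg : ∀ x ∈ interior D, 0 ≤ f'' x) (hc : c ∈ interior D) (hf'c : f' c = 0) :
    IsMinOn f D c := by
  have hconv : ConvexOn ℝ D f := convexOn_of_hasDerivWithinAt2_nonneg hD hf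
    (fun x hx ↦ (hf' x hx).hasDerivWithinAt) (fun x hx ↦ (hf'' x hx).hasDerivWithinAt) hf''_nonneg
  refine hconv.isMinOn_of_rightDeriv_eq_zero hc ?_
  rw [(hf' c hc).hasDerivWithinAt.derivWithin (uniqueDiffWithinAt_Ioi c), hf'c]

section RpowOneAdd

variable {p q t : ℝ}

theorem one_add_mul_self_le_rpow_one_add_of_nonpos (hp : p ≤ 0) (ht : -1 < t) :
    1 + p * t ≤ (1 + t) ^ p := by
  have hpos : 0 < 1 + t := by linarith
  have hlog : Real.log (1 + t) ≤ t := by linarith [Real.log_le_sub_one_of_pos hpos]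
  calc 1 + p * t ≤ Real.log (1 + t) * p + 1 := by
        linarith [mul_le_mul_of_nonpos_right hlog hp]
    _ ≤ Real.exp (Real.log (1 + t) * p) := Real.add_one_le_exp _
    _ = (1 + t) ^ p := (Real.rpow_def_of_pos hpos p).symm

theorem hasDerivAt_rpow_one_add (p : ℝ) (ht : -1 < t) :
    HasDerivAt (fun s : ℝ ↦ (1 + s) ^ p) (p * (1 + t) ^ (p - 1)) t := by
  have hne : 1 + t ≠ 0 := by linarith
  simpa only [one_mul] using ((hasDerivAt_id' t).const_add 1).rpow_const (p := p) (Or.inl hne)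

theorem taylor_three_le_rpow_one_add (hq₁ : 1 ≤ q) (hq₂ : q ≤ 2) (ht : -1 ≤ t) :
    1 + q * t + q * (q - 1) / 2 * t ^ 2 + q * (q - 1) * (q - 2) / 6 * t ^ 3 ≤ (1 + t) ^ q := by
  let g : ℝ → ℝ := fun s ↦ (1 + s) ^ q -
    (1 + q * s + q * (q - 1) / 2 * s ^ 2 + q * (q - 1) * (q - 2) / 6 * s ^ 3)
  let g' : ℝ → ℝ := fun s ↦ q * (1 + s) ^ (q - 1) -
    (q + q * (q - 1) * s + q * (q - 1) * (q - 2) / 2 * s ^ 2)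
  let g'' : ℝ → ℝ := fun s ↦ q * (q - 1) * ((1 + s) ^ (q - 2) - (1 + (q - 2) * s))
  have hg_cont : Continuous g := by
    have hpow : Continuous fun s : ℝ ↦ (1 + s) ^ q :=
      (continuous_const.add continuous_id).rpow_const fun _ ↦ Or.inr (by linarith)
    exact hpow.sub (by fun_prop)
  have hg' : ∀ s ∈ Set.Ioi (-1), HasDerivAt g (g' s) s := fun s hs ↦ by
    refine ((hasDerivAt_rpow_one_add q hs).sub (((((hasDerivAt_id' s).const_mul q).const_add
      1).add ((hasDerivAt_pow 2 s).const_mul _)).add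
      ((hasDerivAt_pow 3 s).const_mul _))).congr_deriv ?_
    simp only [g']; push_cast; ring
  have hg'' : ∀ s ∈ Set.Ioi (-1), HasDerivAt g' (g'' s) s := fun s hs ↦ by
    refine (((hasDerivAt_rpow_one_add (q - 1) hs).const_mul q).sub
      ((((hasDerivAt_id' s).const_mul _).const_add q).add
        ((hasDerivAt_pow 2 s).const_mul _))).congr_deriv ?_
    rw [show q - 1 - 1 = q - 2 by ring]
    simp only [g'']; push_cast; ring
  have hg''_nonneg : ∀ s ∈ Set.Ioi (-1), 0 ≤ g'' s := fun s hs ↦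
    mul_nonneg (mul_nonneg (by linarith) (by linarith))
      (sub_nonneg.2 (one_add_mul_self_le_rpow_one_add_of_nonpos (by linarith) hs))
  have hmin : IsMinOn g (Set.Ici (-1)) 0 :=
    isMinOn_of_hasDerivAt2_nonneg (convex_Ici _) hg_cont.continuousOn (by rwa [interior_Ici])
      (by rwa [interior_Ici]) (by rwa [interior_Ici]) (by simp) (by simp [g'])
  have hg_nonneg : 0 ≤ g t := by simpa [g] using hmin (Set.mem_Ici.2 ht)
  exact sub_nonneg.1 hg_nonneg

theorem one_add_mul_self_add_sq_le_rpow_one_add (hq₁ : 1 ≤ q) (hq₂ : q ≤ 2) (ht : -1 ≤ t)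
    (hqt : (2 - q) * t ≤ 1) : 1 + q * t + q * (q - 1) / 3 * t ^ 2 ≤ (1 + t) ^ q := by
  have hcubic : 0 ≤ q * (q - 1) / 6 * t ^ 2 * (1 - (2 - q) * t) :=
    mul_nonneg (mul_nonneg (div_nonneg (mul_nonneg (by linarith) (by linarith)) (by norm_num))
      (sq_nonneg t)) (sub_nonneg.2 hqt)
  linarith [taylor_three_le_rpow_one_add hq₁ hq₂ ht]

end RpowOneAdd

theorem action_increase_ineq_in_general {a b q x : ℝ} (ha : 0 < a) (hb : 0 < b) (hq₁ : 1 ≤ q)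
    (hq₂ : q ≤ 2) (hax : -a ≤ x) (hqx : (2 - q) * x ≤ a) (hxb : x ≤ b) :
    q * (q - 1) / (3 * a) * x ^ 2 ≤ a * (1 + x / a) ^ q + b * (1 - x / b) ^ q - (a + b) := by
  have ha_term : a + q * x + q * (q - 1) / (3 * a) * x ^ 2 ≤ a * (1 + x / a) ^ q := by
    have hxa : -1 ≤ x / a := by rwa [le_div_iff₀ ha, neg_one_mul]
    have hqxa : (2 - q) * (x / a) ≤ 1 := by rwa [← mul_div_assoc, div_le_one ha]
    calc a + q * x + q * (q - 1) / (3 * a) * x ^ 2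
        = a * (1 + q * (x / a) + q * (q - 1) / 3 * (x / a) ^ 2) := by field_simp
      _ ≤ a * (1 + x / a) ^ q := mul_le_mul_of_nonneg_left
        (one_add_mul_self_add_sq_le_rpow_one_add hq₁ hq₂ hxa hqxa) ha.le
  have hb_term : b - q * x ≤ b * (1 - x / b) ^ q := by
    have hxb' : -1 ≤ -(x / b) := neg_le_neg ((div_le_one hb).2 hxb)
    calc b - q * x = b * (1 + q * -(x / b)) := by field_simp; ring
      _ ≤ b * (1 - x / b) ^ q := mul_le_mul_of_nonneg_left
        (one_add_mul_self_le_rpow_one_add hxb' hq₁) hb.le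
  linarith

/-- For `0 < a ≤ b`, `q ∈ (1,2)` and `x ∈ (−a, a)`:
`a·(1 + x/a)^q + b·(1 − x/b)^q − (a + b) ≥ (q(q − 1)/(3a))·x²`. -/
theorem action_increase_ineq_in (a b q x : ℝ) (ha : 0 < a) (hab : a ≤ b)
    (hq : q ∈ Set.Ioo (1:ℝ) 2) (hx : x ∈ Set.Ioo (-a) a) :
    q * (q - 1) / (3 * a) * x ^ 2 ≤ a * (1 + x / a) ^ q + b * (1 - x / b) ^ q - (a + b) := by
  obtain ⟨hq₁, hq₂⟩ := hq
  obtain ⟨hax, hxa⟩ := hx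
  exact action_increase_ineq_in_general ha (ha.trans_le hab) hq₁.le hq₂.le hax.le
    (by nlinarith) (hxa.le.trans hab)
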